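/- Let ω : ℝ^n → ℝ be a nonzero homogeneous polynomial. Then there exists a₀ < 0 such that for every a ∈ (a₀, 0), the inclusion of {x ∈ ℝ^n : |x| = 1, ω(x) ≤ a} into Ω = {x ∈ ℝ^n : |x| = 1, ω(x) < 0} is a homotopy equivalence; in particular these two subspaces of the unit sphere have the same homotopy type. -/

import Mathlib

open Metric Set

/-!
On the critical scheme of `ω` restricted to the unit sphere, the Kähler differential `dω` vanishes,
so in characteristic zero `ω` is algebraic over the ground field at every generic point. Hence `ω`
has only finitely many critical values on the sphere, and none of them lies in `(a₀, 0)` for a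
suitable `a₀ < 0`. The flow of the negative spherical gradient then pushes every point of
`{ω < 0}` into `{ω < a}` in finite time. Both sublevel sets are invariant under the flow, so the
admissible times at a point form an interval, and a partition of unity chooses one continuously;
running the flow up to the chosen time is a homotopy inverse of the inclusion.
-/

section AlgebraicDifferentials

open KaehlerDifferential Polynomial TensorProduct

theorem formallySmooth_of_charZero (K L : Type*) [Field K] [CharZero K] [Field L] [Algebra K L] :
    Algebra.FormallySmooth K L := by
  obtain ⟨ι, v, hv⟩ := exists_isTranscendenceBasis' K L
  have : Algebra.IsAlgebraic (IntermediateField.adjoin K (range v)) L := hv.isAlgebraic_field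
  exact .of_algebraicIndependent_of_isSeparable hv.1

theorem mapBaseChange_injective_of_formallySmooth (R S T : Type*) [CommRing R] [CommRing S]
    [CommRing T] [Algebra R S] [Algebra R T] [Algebra S T] [IsScalarTower R S T]
    [Algebra.FormallySmooth S T] : Function.Injective (mapBaseChange R S T) := by
  rw [injective_iff_map_eq_zero]
  intro y hy
  obtain ⟨z, rfl⟩ := (Algebra.H1Cotangent.exact_δ_mapBaseChange R S T y).1 hy
  rw [Subsingleton.elim z 0, map_zero]

theorem isAlgebraic_of_D_eq_zero {k L : Type*} [Field k] [CharZero k] [Field L] [Algebra k L]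
    {w : L} (hw : D k L w = 0) : IsAlgebraic k w := by
  by_contra htr
  let : Algebra k[X] L := (aeval w).toAlgebra
  have : IsScalarTower k k[X] L := .of_algebraMap_eq fun r => ((aeval w).commutes r).symm
  have : FaithfulSMul k[X] L :=
    (faithfulSMul_iff_algebraMap_injective _ _).2 (transcendental_iff_injective.1 htr)
  let : Algebra (FractionRing k[X]) L := FractionRing.liftAlgebra k[X] L
  have : IsScalarTower k[X] (FractionRing k[X]) L := FractionRing.isScalarTower_liftAlgebra _ _
  have : Algebra.FormallySmooth k[X] (FractionRing k[X]) :=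
    .of_isLocalization (nonZeroDivisors k[X])
  have : Algebra.FormallySmooth (FractionRing k[X]) L := formallySmooth_of_charZero _ _
  have : Algebra.FormallySmooth k[X] L := .comp _ (FractionRing k[X]) _
  have hX : (1 : L) ⊗ₜ[k[X]] D k k[X] X = 0 := by
    apply mapBaseChange_injective_of_formallySmooth k k[X] L
    rw [mapBaseChange_tmul, map_D, map_zero, one_smul]
    change D k L (aeval w X) = 0
    rw [aeval_X, hw]
  have h1 := congrArg ((TensorProduct.rid k[X] L) ∘ ((polynomialEquiv k).toLinearMap.lTensor L)) hX
  simp at h1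

theorem exists_ne_zero_aeval_mem_of_D_eq_zero {k R : Type*} [Field k] [CharZero k] [CommRing R]
    [Algebra k R] {w : R} (hw : D k R w = 0) (p : Ideal R) [p.IsPrime] :
    ∃ q : k[X], q ≠ 0 ∧ aeval w q ∈ p := by
  let π : R →ₐ[k] FractionRing (R ⧸ p) :=
    (IsScalarTower.toAlgHom k (R ⧸ p) _).comp (Ideal.Quotient.mkₐ k p)
  have hπ : ∀ r, π r = 0 ↔ r ∈ p := fun r => by
    rw [← Ideal.Quotient.eq_zero_iff_mem]
    exact FaithfulSMul.algebraMap_eq_zero_iff (R ⧸ p) (FractionRing (R ⧸ p))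
  have hDw : D k (FractionRing (R ⧸ p)) (π w) = 0 := by
    have := congrArg (KaehlerDifferential.map k k R (FractionRing (R ⧸ p))) hw
    rwa [map_D, map_zero] at this
  obtain ⟨q, hq, hqw⟩ := isAlgebraic_of_D_eq_zero hDw
  exact ⟨q, hq, (hπ _).1 (by rw [← hqw, aeval_algHom_apply])⟩

theorem finite_range_algHom_apply_of_D_eq_zero {k R : Type*} [Field k] [CharZero k] [CommRing R]
    [IsNoetherianRing R] [Algebra k R] {w : R} (hw : D k R w = 0) :
    (range fun φ : R →ₐ[k] k => φ w).Finite := by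
  choose! q hq0 hq using fun p (hp : p ∈ minimalPrimes R) =>
    have : p.IsPrime := hp.1.1
    exists_ne_zero_aeval_mem_of_D_eq_zero hw p
  refine ((minimalPrimes.finite_of_isNoetherianRing R).biUnion fun p hp =>
    finite_setOfPred_isRoot (hq0 p hp)).subset ?_
  rintro _ ⟨φ, rfl⟩
  have : (RingHom.ker φ).IsPrime := RingHom.ker_isPrime _
  obtain ⟨p, hp, hpφ⟩ := Ideal.exists_minimalPrimes_le (bot_le : ⊥ ≤ RingHom.ker φ)
  refine mem_biUnion hp ?_
  rw [mem_ofPred_eq, IsRoot, ← coe_aeval_eq_eval, aeval_algHom_apply]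
  exact hpφ (hq p hp)

end AlgebraicDifferentials

section CriticalValues

open KaehlerDifferential MvPolynomial

theorem D_algebraMap_eq_sum_pderiv_smul {σ k A : Type*} [Fintype σ] [CommRing k] [CommRing A]
    [Algebra k A] [Algebra (MvPolynomial σ k) A] [IsScalarTower k (MvPolynomial σ k) A]
    (P : MvPolynomial σ k) :
    D k A (algebraMap _ A P) =
      ∑ i, algebraMap _ A (pderiv i P) • D k A (algebraMap (MvPolynomial σ k) A (X i)) := by
  have h := congrArg (KaehlerDifferential.map k k (MvPolynomial σ k) A)
    ((mvPolynomialBasis k σ).sum_repr (D k (MvPolynomial σ k) P))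
  simpa only [mvPolynomialBasis_repr_apply, mvPolynomialBasis_apply, map_sum, map_smul, map_D,
    algebraMap_smul] using h.symm

theorem D_eq_zero_of_critical_on_sphere {σ k A : Type*} [Fintype σ] [Field k] [CharZero k]
    [CommRing A] [Algebra k A] [Algebra (MvPolynomial σ k) A]
    [IsScalarTower k (MvPolynomial σ k) A] {P : MvPolynomial σ k} {l : A}
    (hsphere : ∑ i, algebraMap (MvPolynomial σ k) A (X i) ^ 2 = 1)
    (hcrit : ∀ i, algebraMap _ A (pderiv i P) = l * algebraMap (MvPolynomial σ k) A (X i)) :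
    D k A (algebraMap _ A P) = 0 := by
  set x : σ → A := fun i => algebraMap (MvPolynomial σ k) A (X i)
  have hx : (2 : k) • ∑ i, x i • D k A (x i) = 0 := by
    calc (2 : k) • ∑ i, x i • D k A (x i) = D k A (∑ i, x i ^ 2) := by
          simp [Finset.smul_sum, Derivation.leibniz_pow, ofNat_smul_eq_nsmul]
      _ = 0 := by rw [hsphere, Derivation.map_one_eq_zero]
  calc D k A (algebraMap _ A P) = l • ∑ i, x i • D k A (x i) := by
        rw [D_algebraMap_eq_sum_pderiv_smul]
        simp only [hcrit, mul_smul, Finset.smul_sum, x]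
    _ = 0 := by rw [(smul_eq_zero.1 hx).resolve_left two_ne_zero, smul_zero]

theorem finite_criticalValues_on_sphere {σ k : Type*} [Fintype σ] [Field k] [CharZero k]
    (P : MvPolynomial σ k) :
    {c : k | ∃ x : σ → k, ∑ i, x i ^ 2 = 1 ∧ (∃ l, ∀ i, eval x (pderiv i P) = l * x i) ∧
      eval x P = c}.Finite := by
  -- On the sphere, `∂ᵢP = l xᵢ` forces `l = ∑ⱼ xⱼ ∂ⱼP`, so the multiplier can be eliminated.
  let l : MvPolynomial σ k := ∑ j, X j * pderiv j P
  let J : Ideal (MvPolynomial σ k) :=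
    Ideal.span (insert (∑ i, X i ^ 2 - 1) (range fun i => pderiv i P - l * X i))
  have hD : D k (MvPolynomial σ k ⧸ J) (algebraMap _ _ P) = 0 := by
    refine D_eq_zero_of_critical_on_sphere (l := algebraMap _ _ l) ?_ fun i => ?_
    · simp only [← map_pow, ← map_sum]
      exact Ideal.Quotient.eq.2 (Ideal.subset_span (mem_insert _ _))
    · rw [← map_mul]
      exact Ideal.Quotient.eq.2 (Ideal.subset_span (mem_insert_of_mem _ ⟨i, rfl⟩))
  refine (finite_range_algHom_apply_of_D_eq_zero hD).subset ?_
  rintro _ ⟨x, hx, ⟨m, hm⟩, rfl⟩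
  have hlm : eval x l = m := by
    calc eval x l = m * ∑ i, x i ^ 2 := by
          simp only [l, map_sum, map_mul, eval_X, hm, Finset.mul_sum]
          exact Finset.sum_congr rfl fun i _ => by ring
      _ = m := by rw [hx, mul_one]
  have hJ : J ≤ RingHom.ker (aeval x : MvPolynomial σ k →ₐ[k] k) := by
    rw [Ideal.span_le]
    rintro _ (rfl | ⟨i, rfl⟩)
    · simp [hx]
    · simp [aeval_eq_eval, hm, hlm]
  exact ⟨Ideal.Quotient.liftₐ J (aeval x) hJ, DFunLike.congr_fun (coe_aeval_eq_eval x) P⟩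

end CriticalValues

section FlowOfVectorField

open scoped NNReal Topology

variable {E : Type*} [NormedAddCommGroup E] [NormedSpace ℝ E] {V : E → E} {K : ℝ≥0}

theorem eqOn_of_isIntegralCurveOn_Ioo (hV : LipschitzWith K V) {γ γ' : ℝ → E} {a b t₀ : ℝ}
    (ht₀ : t₀ ∈ Ioo a b) (hγ : IsIntegralCurveOn γ (fun _ => V) (Ioo a b))
    (hγ' : IsIntegralCurveOn γ' (fun _ => V) (Ioo a b)) (h : γ t₀ = γ' t₀) :
    EqOn γ γ' (Ioo a b) :=
  ODE_solution_unique_of_mem_Ioo (v := fun _ => V) (s := fun _ => univ)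
    (fun _ _ => hV.lipschitzOnWith) ht₀
    (fun t ht => ⟨(hγ t ht).hasDerivAt (Ioo_mem_nhds ht.1 ht.2), mem_univ _⟩)
    (fun t ht => ⟨(hγ' t ht).hasDerivAt (Ioo_mem_nhds ht.1 ht.2), mem_univ _⟩) h

theorem eq_of_isIntegralCurve (hV : LipschitzWith K V) {γ γ' : ℝ → E} {t₀ : ℝ}
    (hγ : IsIntegralCurve γ (fun _ => V)) (hγ' : IsIntegralCurve γ' (fun _ => V))
    (h : γ t₀ = γ' t₀) : γ = γ' :=
  ODE_solution_unique_univ (v := fun _ => V) (s := fun _ => univ)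
    (fun _ => hV.lipschitzOnWith) (fun t => ⟨hγ t, mem_univ _⟩) (fun t => ⟨hγ' t, mem_univ _⟩) h

variable [CompleteSpace E]

theorem exists_isIntegralCurveOn_ball (hV : LipschitzWith K V) {M : ℝ} (hM : ∀ x, ‖V x‖ ≤ M)
    (R : ℝ) :
    ∃ α : ℝ → E → E, ContinuousOn (Function.uncurry α) (Ioo (-R) R ×ˢ ball 0 R) ∧
      ∀ x ∈ ball 0 R, α 0 x = x ∧ IsIntegralCurveOn (α · x) (fun _ => V) (Ioo (-R) R) := by
  rcases le_or_gt R 0 with hR | hR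
  · exact ⟨fun _ => id, by simp [ball_eq_empty.2 hR]⟩
  lift M to ℝ≥0 using (norm_nonneg _).trans (hM 0)
  lift R to ℝ≥0 using hR.le
  have hPL : IsPicardLindelof (fun _ => V) (⟨0, by simp⟩ : Icc (-R : ℝ) R) 0
      (M * R + R) R M K :=
    .of_time_independent (fun x _ => hM x) hV.lipschitzOnWith (by simp)
  obtain ⟨α, hα, hαc⟩ := hPL.exists_forall_mem_closedBall_eq_hasDerivWithinAt_continuousOn
  refine ⟨fun t x => α (x, t), ?_, fun x hx => ⟨(hα x (ball_subset_closedBall hx)).1, fun t ht =>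
    ((hα x (ball_subset_closedBall hx)).2 t (Ioo_subset_Icc_self ht)).mono Ioo_subset_Icc_self⟩⟩
  exact hαc.comp continuous_swap.continuousOn fun p hp =>
    ⟨ball_subset_closedBall hp.2, Ioo_subset_Icc_self hp.1⟩

theorem exists_continuous_forall_isIntegralCurve (hV : LipschitzWith K V) {M : ℝ}
    (hM : ∀ x, ‖V x‖ ≤ M) :
    ∃ φ : ℝ → E → E, Continuous (Function.uncurry φ) ∧
      ∀ x, φ 0 x = x ∧ IsIntegralCurve (φ · x) fun _ => V := by
  choose α hαc hα using exists_isIntegralCurveOn_ball hV hM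
  let D : ℝ → Set (ℝ × E) := fun r => Ioo (-r) r ×ˢ ball 0 r
  have hDo : ∀ r, IsOpen (D r) := fun r => isOpen_Ioo.prod isOpen_ball
  have hαα : ∀ {r r'}, r ≤ r' → ∀ p ∈ D r, α r p.1 p.2 = α r' p.1 p.2 := by
    rintro r r' hrr' ⟨t, x⟩ ⟨ht, hx⟩
    have hx' := ball_subset_ball hrr' hx
    refine eqOn_of_isIntegralCurveOn_Ioo hV (t₀ := 0) ?_ (hα r x hx).2
      ((hα r' x hx').2.mono (Ioo_subset_Ioo (neg_le_neg hrr') hrr')) ?_ ht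
    · exact ⟨neg_lt_zero.2 (pos_of_mem_ball hx), pos_of_mem_ball hx⟩
    · exact (hα r x hx).1.trans (hα r' x hx').1.symm
  let R : ℝ × E → ℝ := fun p => |p.1| + ‖p.2‖ + 1
  have hR : ∀ p, p ∈ D (R p) := fun p => by
    have := abs_nonneg p.1
    have := norm_nonneg p.2
    simp only [D, R, mem_prod, mem_Ioo, ← abs_lt, mem_ball_zero_iff]
    constructor <;> linarith
  let φ : ℝ → E → E := fun t x => α (R (t, x)) t x
  have hφα : ∀ r, EqOn (Function.uncurry φ) (Function.uncurry (α r)) (D r) := fun r p hp =>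
    (le_total (R p) r).elim (fun h => hαα h p (hR p)) (fun h => (hαα h p hp).symm)
  refine ⟨φ, continuous_iff_continuousAt.2 fun p => ?_, fun x => ⟨(hα _ x (hR (0, x)).2).1,
    fun t => ?_⟩⟩
  · have hp : D (R p) ∈ 𝓝 p := (hDo _).mem_nhds (hR p)
    exact ((hαc _).continuousAt hp).congr ((hφα _).symm.eventuallyEq_of_mem hp)
  · obtain ⟨ht, hx⟩ := hR (t, x)
    have hD := Ioo_mem_nhds ht.1 ht.2
    have heq : EqOn (φ · x) (α (R (t, x)) · x) (Ioo (-R (t, x)) (R (t, x))) :=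
      fun s hs => hφα _ (x := (s, x)) ⟨hs, hx⟩
    exact (((hα _ x hx).2 t ht).hasDerivAt hD).congr_of_eventuallyEq (heq.eventuallyEq_of_mem hD)

theorem exists_flow_of_lipschitzWith_of_bounded (hV : LipschitzWith K V) {M : ℝ}
    (hM : ∀ x, ‖V x‖ ≤ M) : ∃ ϕ : Flow ℝ E, ∀ x, IsIntegralCurve (ϕ · x) fun _ => V := by
  obtain ⟨φ, hφ, hφV⟩ := exists_continuous_forall_isIntegralCurve hV hM
  have hadd : ∀ s t x, φ (s + t) x = φ s (φ t x) := fun s t x =>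
    congrFun (eq_of_isIntegralCurve hV (t₀ := 0) ((hφV x).2.comp_add t) (hφV (φ t x)).2
      (by simp [(hφV _).1])) s
  exact ⟨⟨φ, hφ, hadd, fun x => (hφV x).1⟩, fun x => (hφV x).2⟩

end FlowOfVectorField

section FlowHomotopy

open scoped ContinuousMap Topology unitInterval

variable {X : Type*} [TopologicalSpace X] {ϕ : Flow ℝ X} {A B : Set X}

theorem homotopic_id_of_eq_flow (hB : IsForwardInvariant ϕ B) {τ : C(B, ℝ)} (hτ : ∀ x, 0 ≤ τ x)
    {g : C(B, B)} (hg : ∀ x, (g x : X) = ϕ (τ x) x) : g.Homotopic (.id B) := by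
  refine ContinuousMap.Homotopic.symm ⟨{
    toFun := fun p => ⟨ϕ (p.1 * τ p.2) p.2, hB (mul_nonneg p.1.2.1 (hτ p.2)) p.2.2⟩
    continuous_toFun := by fun_prop
    map_zero_left := fun x => Subtype.ext ?_
    map_one_left := fun x => Subtype.ext ?_ }⟩
  · simp
  · simp [hg]

theorem ordConnected_setOf_flow_mem (hA : IsForwardInvariant ϕ A) (x : X) :
    OrdConnected {t | 0 ≤ t ∧ ϕ t x ∈ A} := by
  refine ⟨fun s hs t _ r hr => ⟨hs.1.trans hr.1, ?_⟩⟩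
  rw [← sub_add_cancel r s, ϕ.map_add]
  exact hA (sub_nonneg.2 hr.1) hs.2

theorem exists_continuousMap_flow_mem [NormalSpace B] [ParacompactSpace B]
    (hA : IsForwardInvariant ϕ A) (hB : IsForwardInvariant ϕ B)
    (hBA : ∀ x ∈ B, ∃ t ≥ 0, A ∈ 𝓝[B] ϕ t x) :
    ∃ τ : C(B, ℝ), ∀ x : B, 0 ≤ τ x ∧ ϕ (τ x) x ∈ A := by
  refine exists_continuous_forall_mem_convex_of_local_const
    (t := fun x : B => {t : ℝ | 0 ≤ t ∧ ϕ t x ∈ A})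
    (fun x => (ordConnected_setOf_flow_mem hA x).convex) fun x => ?_
  obtain ⟨t, ht, htA⟩ := hBA x x.2
  have hϕ : Filter.Tendsto (fun y : B => ϕ t y) (𝓝 x) (𝓝[B] ϕ t x) :=
    tendsto_nhdsWithin_iff.2 ⟨Continuous.tendsto (by fun_prop) x,
      .of_forall fun y => hB ht y.2⟩
  exact ⟨t, (hϕ.eventually_mem htA).mono fun y hy => ⟨ht, hy⟩⟩

theorem exists_homotopyEquiv_inclusion_of_flow [NormalSpace B] [ParacompactSpace B] (hAB : A ⊆ B)
    (hA : IsForwardInvariant ϕ A) (hB : IsForwardInvariant ϕ B)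
    (hBA : ∀ x ∈ B, ∃ t ≥ 0, A ∈ 𝓝[B] ϕ t x) :
    ∃ h : A ≃ₕ B, h.toFun = ContinuousMap.inclusion hAB := by
  obtain ⟨τ, hτ⟩ := exists_continuousMap_flow_mem hA hB hBA
  let g : C(B, A) := ⟨fun x => ⟨ϕ (τ x) x, (hτ x).2⟩, by fun_prop⟩
  exact ⟨⟨ContinuousMap.inclusion hAB, g,
    homotopic_id_of_eq_flow hA (τ := τ.comp (ContinuousMap.inclusion hAB)) (fun x => (hτ _).1)
      fun _ => rfl,
    homotopic_id_of_eq_flow hB (fun x => (hτ x).1) fun _ => rfl⟩, rfl⟩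

end FlowHomotopy

section Lyapunov

theorem exists_notMem_of_hasDerivAt_neg {X : Type*} [TopologicalSpace X] {C : Set X}
    (hC : IsCompact C) {f ρ : X → ℝ} (hf : ContinuousOn f C) (hρ : ContinuousOn ρ C)
    (hρ0 : ∀ x ∈ C, 0 < ρ x) {γ : ℝ → X}
    (hγ : ∀ t, HasDerivAt (fun s => f (γ s)) (-ρ (γ t)) t) : ∃ t ≥ 0, γ t ∉ C := by
  by_contra! hγC
  obtain ⟨x₀, hx₀, hmin⟩ := hC.exists_isMinOn ⟨_, hγC 0 le_rfl⟩ hρ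
  obtain ⟨m, hm⟩ := hC.bddBelow_image hf
  have hdiff : ∀ t, DifferentiableAt ℝ (fun s => f (γ s)) t := fun t => (hγ t).differentiableAt
  have hdecr : ∀ t ≥ 0, f (γ t) - f (γ 0) ≤ -ρ x₀ * (t - 0) := fun t ht =>
    (convex_Ici 0).image_sub_le_mul_sub_of_deriv_le
      (fun s _ => (hdiff s).continuousAt.continuousWithinAt)
      (fun s _ => (hdiff s).differentiableWithinAt)
      (fun s hs => by
        rw [(hγ s).deriv]
        exact neg_le_neg (hmin (hγC s (interior_subset hs)))) 0 self_mem_Ici t ht ht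
  obtain ⟨t, ht, hlt⟩ : ∃ t ≥ 0, f (γ 0) - ρ x₀ * t < m := by
    have hm0 : m ≤ f (γ 0) := hm (mem_image_of_mem f (hγC 0 le_rfl))
    refine ⟨(f (γ 0) - m + 1) / ρ x₀, div_nonneg (by linarith) (hρ0 x₀ hx₀).le, ?_⟩
    rw [mul_div_cancel₀ _ (hρ0 x₀ hx₀).ne']
    linarith
  linarith [hdecr t ht, hm (mem_image_of_mem f (hγC t ht))]

end Lyapunov

section SphericalGradient

open scoped ContDiff Gradient RealInnerProductSpace Topology ContinuousMap

variable {E : Type*} [NormedAddCommGroup E] [InnerProductSpace ℝ E]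

theorem norm_eq_of_hasDerivAt_orthogonal {γ γ' : ℝ → E} (hγ : ∀ t, HasDerivAt γ (γ' t) t)
    (horth : ∀ t, ⟪γ t, γ' t⟫ = 0) (s t : ℝ) : ‖γ s‖ = ‖γ t‖ := by
  have hd : ∀ t, HasDerivAt (fun t => ‖γ t‖ ^ 2) 0 t := fun t => by
    simpa only [horth, mul_zero] using (hγ t).norm_sq
  have h := is_const_of_deriv_eq_zero (fun t => (hd t).differentiableAt) (fun t => (hd t).deriv) s t
  exact (pow_left_inj₀ (norm_nonneg _) (norm_nonneg _) two_ne_zero).1 h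

variable [CompleteSpace E] {f : E → ℝ}

/-- The spherical gradient of `f : E → ℝ`: at a unit vector `x` it is the gradient of the
restriction of `f` to the unit sphere, i.e. the component of `∇ f x` orthogonal to `x`. The factor
`‖x‖ ^ 2` extends it to a field that is smooth at the origin and everywhere orthogonal to the
position vector. -/
noncomputable def sphericalGradient (f : E → ℝ) (x : E) : E :=
  ‖x‖ ^ 2 • ∇ f x - ⟪∇ f x, x⟫ • x

theorem inner_sphericalGradient_right (f : E → ℝ) (x : E) : ⟪x, sphericalGradient f x⟫ = 0 := by
  rw [sphericalGradient, inner_sub_right, inner_smul_right, inner_smul_right,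
    real_inner_self_eq_norm_sq, real_inner_comm]
  ring

theorem inner_gradient_sphericalGradient (f : E → ℝ) {x : E} (hx : ‖x‖ = 1) :
    ⟪∇ f x, sphericalGradient f x⟫ = ‖sphericalGradient f x‖ ^ 2 := by
  have h : ∇ f x = sphericalGradient f x + ⟪∇ f x, x⟫ • x := by simp [sphericalGradient, hx]
  nth_rw 1 [h]
  rw [inner_add_left, inner_smul_left, inner_sphericalGradient_right, mul_zero, add_zero,
    real_inner_self_eq_norm_sq]

theorem contDiff_gradient {m n : ℕ∞ω} (hf : ContDiff ℝ n f) (hmn : m + 1 ≤ n) :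
    ContDiff ℝ m (∇ f) :=
  (InnerProductSpace.toDual ℝ E).symm.contDiff.comp (hf.fderiv_right hmn)

theorem contDiff_sphericalGradient {m n : ℕ∞ω} (hf : ContDiff ℝ n f) (hmn : m + 1 ≤ n) :
    ContDiff ℝ m (sphericalGradient f) :=
  have hgrad := contDiff_gradient hf hmn
  ((contDiff_norm_sq ℝ).smul hgrad).sub ((hgrad.inner ℝ contDiff_id).smul contDiff_id)

theorem exists_flow_sphericalGradient [FiniteDimensional ℝ E] (hf : ContDiff ℝ 2 f) :
    ∃ ϕ : Flow ℝ E, ∀ x, ‖x‖ = 1 → ∀ t, ‖ϕ t x‖ = 1 ∧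
      HasDerivAt (fun s => f (ϕ s x)) (-‖sphericalGradient f (ϕ t x)‖ ^ 2) t := by
  let χ : ContDiffBump (0 : E) := ⟨1, 2, one_pos, one_lt_two⟩
  let V : E → E := fun x => -(χ x • sphericalGradient f x)
  have hVd : ContDiff ℝ 1 V :=
    (χ.contDiff.smul (contDiff_sphericalGradient hf one_add_one_eq_two.le)).neg
  have hVs : HasCompactSupport V := (χ.hasCompactSupport.smul_right).neg
  obtain ⟨K, hK⟩ := hVd.lipschitzWith_of_hasCompactSupport hVs one_ne_zero
  obtain ⟨M, hM⟩ := hVs.exists_bound_of_continuous hVd.continuous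
  obtain ⟨ϕ, hϕ⟩ := exists_flow_of_lipschitzWith_of_bounded hK hM
  have hV : ∀ x, ‖x‖ = 1 → V x = -sphericalGradient f x := fun x hx => by
    rw [show V x = -(χ x • sphericalGradient f x) from rfl,
      χ.one_of_mem_closedBall (mem_closedBall_zero_iff.2 hx.le), one_smul]
  refine ⟨ϕ, fun x hx t => ?_⟩
  have hnorm : ‖ϕ t x‖ = 1 := by
    have horth : ∀ s, ⟪ϕ s x, V (ϕ s x)⟫ = 0 := fun s => by
      simp [V, inner_smul_right, inner_sphericalGradient_right]
    rw [norm_eq_of_hasDerivAt_orthogonal (hϕ x) horth t 0, ϕ.map_zero_apply, hx]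
  refine ⟨hnorm, ?_⟩
  have hfϕ : HasDerivAt (fun s => f (ϕ s x)) ⟪∇ f (ϕ t x), V (ϕ t x)⟫ t := by
    rw [inner_gradient_left]
    exact (hf.differentiable two_ne_zero _).hasFDerivAt.comp_hasDerivAt t (hϕ x t)
  rwa [hV _ hnorm, inner_neg_right, inner_gradient_sphericalGradient f hnorm] at hfϕ

theorem exists_lt_of_sphericalGradient_ne_zero [FiniteDimensional ℝ E] (hf : ContDiff ℝ 1 f)
    {γ : ℝ → E} (hγ1 : ∀ t, ‖γ t‖ = 1)
    (hγ : ∀ t, HasDerivAt (fun s => f (γ s)) (-‖sphericalGradient f (γ t)‖ ^ 2) t) {a : ℝ}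
    (hreg : ∀ y, ‖y‖ = 1 → f y ∈ Icc a (f (γ 0)) → sphericalGradient f y ≠ 0) :
    ∃ t ≥ 0, f (γ t) < a := by
  have hC : IsCompact (sphere 0 1 ∩ f ⁻¹' Icc a (f (γ 0))) :=
    (isCompact_sphere 0 1).inter_right (isClosed_Icc.preimage hf.continuous)
  have hρ : Continuous fun y => ‖sphericalGradient f y‖ ^ 2 :=
    (contDiff_sphericalGradient hf (zero_add 1).le).continuous.norm.pow 2
  have hρ0 : ∀ y ∈ sphere 0 1 ∩ f ⁻¹' Icc a (f (γ 0)), 0 < ‖sphericalGradient f y‖ ^ 2 :=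
    fun y hy => pow_pos (norm_pos_iff.2 (hreg y (mem_sphere_zero_iff_norm.1 hy.1) hy.2)) 2
  obtain ⟨t, ht, htC⟩ :=
    exists_notMem_of_hasDerivAt_neg hC hf.continuous.continuousOn hρ.continuousOn hρ0 hγ
  refine ⟨t, ht, lt_of_not_ge fun hat => htC ⟨mem_sphere_zero_iff_norm.2 (hγ1 t), hat, ?_⟩⟩
  exact antitone_of_hasDerivAt_nonpos hγ (fun s => neg_nonpos.2 (sq_nonneg _)) ht

theorem exists_homotopyEquiv_sublevel_of_sphericalGradient_ne_zero [FiniteDimensional ℝ E]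
    (hf : ContDiff ℝ 2 f) {a c : ℝ} (hac : a < c)
    (hreg : ∀ x, ‖x‖ = 1 → f x ∈ Ico a c → sphericalGradient f x ≠ 0) :
    ∃ h : {x | ‖x‖ = 1 ∧ f x ≤ a} ≃ₕ {x | ‖x‖ = 1 ∧ f x < c}, ∀ x, (h.toFun x : E) = x := by
  obtain ⟨ϕ, hϕ⟩ := exists_flow_sphericalGradient hf
  have hanti : ∀ x, ‖x‖ = 1 → ∀ t ≥ 0, f (ϕ t x) ≤ f x := fun x hx t ht => by
    simpa only [ϕ.map_zero_apply] using antitone_of_hasDerivAt_nonpos (fun t => (hϕ x hx t).2)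
      (fun t => neg_nonpos.2 (sq_nonneg _)) ht
  set A : Set E := {x | ‖x‖ = 1 ∧ f x ≤ a}
  set B : Set E := {x | ‖x‖ = 1 ∧ f x < c}
  have hAB : A ⊆ B := fun x hx => ⟨hx.1, hx.2.trans_lt hac⟩
  have hA : IsForwardInvariant ϕ A := fun t ht x hx =>
    ⟨(hϕ x hx.1 t).1, (hanti x hx.1 t ht).trans hx.2⟩
  have hB : IsForwardInvariant ϕ B := fun t ht x hx =>
    ⟨(hϕ x hx.1 t).1, (hanti x hx.1 t ht).trans_lt hx.2⟩
  have hBA : ∀ x ∈ B, ∃ t ≥ 0, A ∈ 𝓝[B] ϕ t x := fun x hx => by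
    obtain ⟨t, ht, hta⟩ := exists_lt_of_sphericalGradient_ne_zero (hf.of_le one_le_two)
      (fun t => (hϕ x hx.1 t).1) (fun t => (hϕ x hx.1 t).2) fun y hy hya =>
        hreg y hy ⟨hya.1, hya.2.trans_lt (by simpa only [ϕ.map_zero_apply] using hx.2)⟩
    refine ⟨t, ht, mem_nhdsWithin.2 ⟨{y | f y < a}, isOpen_lt hf.continuous continuous_const, hta,
      fun y hy => ⟨hy.2.1, hy.1.le⟩⟩⟩
  obtain ⟨h, hh⟩ := exists_homotopyEquiv_inclusion_of_flow hAB hA hB hBA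
  exact ⟨h, fun x => by rw [hh]; rfl⟩

end SphericalGradient

section PolynomialOnSphere

open MvPolynomial
open scoped Gradient

theorem hasFDerivAt_eval_mvPolynomial {σ 𝕜 E : Type*} [Fintype σ] [NontriviallyNormedField 𝕜]
    [NormedAddCommGroup E] [NormedSpace 𝕜 E] {f : σ → E → 𝕜} {f' : σ → E →L[𝕜] 𝕜} {x : E}
    (hf : ∀ i, HasFDerivAt (f i) (f' i) x) (P : MvPolynomial σ 𝕜) :
    HasFDerivAt (fun y => eval (f · y) P) (∑ i, eval (f · x) (pderiv i P) • f' i) x := by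
  classical
  induction P using MvPolynomial.induction_on with
  | C a =>
    simp only [eval_C]
    refine (hasFDerivAt_const a x).congr_fderiv ?_
    ext v
    simp
  | add p q hp hq =>
    simp only [map_add]
    refine (hp.fun_add hq).congr_fderiv ?_
    rw [← Finset.sum_add_distrib]
    exact Finset.sum_congr rfl fun j _ => (add_smul _ _ _).symm
  | mul_X p i hp =>
    simp only [map_mul, eval_X]
    refine (hp.fun_mul (hf i)).congr_fderiv ?_
    ext v
    simp [pderiv_X, Pi.single_apply, apply_ite, add_mul, Finset.sum_add_distrib,
      Finset.mul_sum, mul_assoc]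

variable {ι : Type*} [Fintype ι]

theorem gradient_eval_mvPolynomial (P : MvPolynomial ι ℝ) (x : EuclideanSpace ℝ ι) :
    ∇ (fun y : EuclideanSpace ℝ ι => eval y P) x = .toLp 2 fun i => eval x (pderiv i P) := by
  have h := hasFDerivAt_eval_mvPolynomial
    (fun i => (EuclideanSpace.proj (𝕜 := ℝ) i).hasFDerivAt (x := x)) P
  refine HasGradientAt.gradient (hasGradientAt_iff_hasFDerivAt.2 (h.congr_fderiv ?_))
  ext y
  simp [PiLp.inner_apply, mul_comm]

theorem contDiff_eval_mvPolynomial (P : MvPolynomial ι ℝ) {n : WithTop ℕ∞} :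
    ContDiff ℝ n fun x : EuclideanSpace ℝ ι => eval x P := by
  induction P using MvPolynomial.induction_on with
  | C a => simpa only [eval_C] using contDiff_const
  | add p q hp hq => simpa only [map_add] using hp.add hq
  | mul_X p i hp =>
    simp only [map_mul, eval_X]
    exact hp.mul (by fun_prop)

theorem exists_lt_forall_mem_Ioo_notMem_of_finite {α : Type*} [LinearOrder α] [NoMinOrder α]
    {S : Set α} (hS : S.Finite) (c : α) : ∃ a < c, ∀ b ∈ Ioo a c, b ∉ S := by
  rcases (S ∩ Iio c).eq_empty_or_nonempty with h | h
  · obtain ⟨a, ha⟩ := exists_lt c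
    exact ⟨a, ha, fun b hb hbS => h.subset ⟨hbS, hb.2⟩⟩
  · obtain ⟨a, ha, hmax⟩ := exists_max_image _ id (hS.inter_of_left _) h
    exact ⟨a, ha.2, fun b hb hbS => (hmax b ⟨hbS, hb.2⟩).not_gt hb.1⟩

theorem critical_of_sphericalGradient_eval_eq_zero {P : MvPolynomial ι ℝ}
    {x : EuclideanSpace ℝ ι} (hx : ‖x‖ = 1)
    (h : sphericalGradient (fun y : EuclideanSpace ℝ ι => eval y P) x = 0) :
    ∃ l, ∀ i, eval x (pderiv i P) = l * x i := by
  rw [sphericalGradient, hx, one_pow, one_smul, sub_eq_zero, gradient_eval_mvPolynomial] at h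
  exact ⟨_, fun i => congrArg (· i) h⟩

theorem finite_eval_of_sphericalGradient_eq_zero (P : MvPolynomial ι ℝ) :
    {c | ∃ x : EuclideanSpace ℝ ι, ‖x‖ = 1 ∧
      sphericalGradient (fun y : EuclideanSpace ℝ ι => eval y P) x = 0 ∧ eval x P = c}.Finite := by
  refine (finite_criticalValues_on_sphere P).subset ?_
  rintro c ⟨x, hx, h, rfl⟩
  exact ⟨x, by rw [← EuclideanSpace.real_norm_sq_eq, hx, one_pow],
    critical_of_sphericalGradient_eval_eq_zero hx h, rfl⟩

theorem statement2_general (P : MvPolynomial ι ℝ) (c : ℝ) (ω : EuclideanSpace ℝ ι → ℝ)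
    (hωP : ∀ x : EuclideanSpace ℝ ι, ω x = eval (fun i => x i) P) :
    ∃ a₀ < c, ∀ a ∈ Ioo a₀ c,
      ∃ h : ContinuousMap.HomotopyEquiv
        ↥{x : EuclideanSpace ℝ ι | ‖x‖ = 1 ∧ ω x ≤ a}
        ↥{x : EuclideanSpace ℝ ι | ‖x‖ = 1 ∧ ω x < c},
      ∀ x : ↥{x : EuclideanSpace ℝ ι | ‖x‖ = 1 ∧ ω x ≤ a},
        ((h.toFun x : EuclideanSpace ℝ ι) = (x : EuclideanSpace ℝ ι)) := by
  obtain rfl : ω = fun x : EuclideanSpace ℝ ι => eval x P := funext hωP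
  obtain ⟨a₀, ha₀, hreg⟩ :=
    exists_lt_forall_mem_Ioo_notMem_of_finite (finite_eval_of_sphericalGradient_eq_zero P) c
  refine ⟨a₀, ha₀, fun a ha => ?_⟩
  refine exists_homotopyEquiv_sublevel_of_sphericalGradient_ne_zero
    (contDiff_eval_mvPolynomial P) ha.2 ?_
  exact fun x hx hxa h0 => hreg _ ⟨ha.1.trans_le hxa.1, hxa.2⟩ ⟨x, hx, h0, rfl⟩

end PolynomialOnSphere

/-- For a nonzero homogeneous polynomial `ω : ℝⁿ → ℝ` there exists
`a₀ < 0` such that for every `a ∈ (a₀, 0)` the inclusion of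
`{x : ‖x‖ = 1, ω x ≤ a}` into `Ω = {x : ‖x‖ = 1, ω x < 0}` is a homotopy equivalence. -/
theorem statement2 (n d : ℕ) (P : MvPolynomial (Fin n) ℝ) (hP0 : P ≠ 0)
    (hPhom : P.IsHomogeneous d)
    (ω : EuclideanSpace ℝ (Fin n) → ℝ)
    (hωP : ∀ x : EuclideanSpace ℝ (Fin n), ω x = MvPolynomial.eval (fun i => x i) P) :
    ∃ a₀ < (0 : ℝ), ∀ a ∈ Ioo a₀ (0 : ℝ),
      ∃ h : ContinuousMap.HomotopyEquiv
        ↥{x : EuclideanSpace ℝ (Fin n) | ‖x‖ = 1 ∧ ω x ≤ a}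
        ↥{x : EuclideanSpace ℝ (Fin n) | ‖x‖ = 1 ∧ ω x < 0},
      ∀ x : ↥{x : EuclideanSpace ℝ (Fin n) | ‖x‖ = 1 ∧ ω x ≤ a},
        ((h.toFun x : EuclideanSpace ℝ (Fin n)) = (x : EuclideanSpace ℝ (Fin n))) :=
  statement2_general P 0 ω hωP
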